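/- arXiv:2504.11768 — 5 statements merged into one kernel-verified Lean document; each statement's English description precedes it below -/
import Mathlib

section
/- Let T be a compactly generated triangulated category with a generating sequence G, and suppose there is an integer A > 0 such that M^G_i ⊆ ∪_{|n|≤A} Σ^n M^G_{i+1} for every integer i. Then (1) for every integer i and every positive integer j, M^G_i ⊆ ∪_{|n|≤jA} Σ^n M^G_{i+j}; and (2) for every integer i, T^c = ∪_{n∈ℤ} Σ^n M^G_i. -/
namespace GApprox

open CategoryTheory CategoryTheory.Limits CategoryTheory.Pretriangulated

universe w v u

variable (C : Type u) [Category.{v} C] [HasZeroObject C] [HasShift C ℤ]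
  [Preadditive C] [∀ n : ℤ, (shiftFunctor C n).Additive] [Pretriangulated C]
  [HasCoproducts.{v} C]

/-- The right orthogonal of a class of objects. -/
def rOrth (A : Set C) : Set C := {X | ∀ a ∈ A, ∀ f : a ⟶ X, f = 0}

/-- The left orthogonal of a class of objects. -/
def lOrth (A : Set C) : Set C := {X | ∀ a ∈ A, ∀ f : X ⟶ a, f = 0}

/-- `Hom(A, B) = 0`. -/
def homZero (A B : Set C) : Prop := ∀ a ∈ A, ∀ b ∈ B, ∀ f : a ⟶ b, f = 0

/-- The star operation `A ⋆ B`: objects `Y` admitting a distinguished triangle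
`X ⟶ Y ⟶ Z ⟶ ΣX` with `X ∈ A` and `Z ∈ B`. -/
def starSet (A B : Set C) : Set C :=
  {Y | ∃ (X Z : C) (f : X ⟶ Y) (g : Y ⟶ Z) (h : Z ⟶ X⟦(1 : ℤ)⟧),
    Triangle.mk f g h ∈ (distTriang C) ∧ X ∈ A ∧ Z ∈ B}

/-- The (strictly full) shift `Σⁿ A` of a class of objects. -/
def shiftSet (n : ℤ) (A : Set C) : Set C :=
  {X | ∃ a ∈ A, Nonempty (X ≅ (shiftFunctor C n).obj a)}

/-- An object is compact if any map to a coproduct factors through a finite subcoproduct. -/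
def IsCompactObj (X : C) : Prop :=
  ∀ (α : Type v) (f : α → C) (g : X ⟶ ∐ f),
    ∃ (s : Finset α) (h : X ⟶ ∐ (fun i : {a : α // a ∈ s} => f i.1)),
      g = h ≫ Sigma.desc (fun i => Sigma.ι f i.1)

/-- The class of compact objects `T^c`. -/
def compacts : Set C := {X | IsCompactObj C X}

/-- The category is compactly generated. -/
def CompactlyGenerated : Prop :=
  ∀ X : C, (∀ K ∈ compacts C, ∀ f : K ⟶ X, f = 0) → IsZero X

/-- Closure under direct summands (retracts), `smd`. -/
def smd (A : Set C) : Set C :=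
  {X | ∃ Y ∈ A, ∃ (i : X ⟶ Y) (r : Y ⟶ X), i ≫ r = 𝟙 X}

/-- Closure of a class of objects under finite direct sums and extensions (`coprod`). -/
inductive extClosure (U : Set C) : C → Prop
  | of {X : C} : X ∈ U → extClosure U X
  | zero {X : C} : IsZero X → extClosure U X
  | ext {X Y Z : C} (f : X ⟶ Y) (g : Y ⟶ Z) (h : Z ⟶ X⟦(1 : ℤ)⟧) :
      Triangle.mk f g h ∈ (distTriang C) → extClosure U X → extClosure U Z → extClosure U Y

/-- Closure of a class of objects under arbitrary coproducts, extensions and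
direct summands. -/
inductive bigClosure (U : Set C) : C → Prop
  | of {X : C} : X ∈ U → bigClosure U X
  | zero {X : C} : IsZero X → bigClosure U X
  | coprod {α : Type v} (f : α → C) :
      (∀ i, bigClosure U (f i)) → ∀ {X : C}, (X ≅ ∐ f) → bigClosure U X
  | ext {X Y Z : C} (f : X ⟶ Y) (g : Y ⟶ Z) (h : Z ⟶ X⟦(1 : ℤ)⟧) :
      Triangle.mk f g h ∈ (distTriang C) → bigClosure U X → bigClosure U Z → bigClosure U Y
  | retract {X Y : C} (i : X ⟶ Y) (r : Y ⟶ X) :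
      i ≫ r = 𝟙 X → bigClosure U Y → bigClosure U X

/-- Closure of a class of objects under finite direct sums, `add`. -/
def addClosure (U : Set C) : Set C :=
  {X | ∃ (n : ℕ) (f : ULift.{v} (Fin n) → C), (∀ i, f i ∈ U) ∧ Nonempty (X ≅ ∐ f)}

/-- Closure of a class of objects under arbitrary coproducts, `Add`. -/
def bigAddClosure (U : Set C) : Set C :=
  {X | ∃ (α : Type v) (f : α → C), (∀ i, f i ∈ U) ∧ Nonempty (X ≅ ∐ f)}

/-- `coprod_n(U)`. -/
def coprodPow (U : Set C) : ℕ → Set C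
  | 0 => {X | IsZero X}
  | n + 1 => starSet C (addClosure C U) (coprodPow U n)

/-- `Coprod_n(U)`. -/
def coprodPowBig (U : Set C) : ℕ → Set C
  | 0 => {X | IsZero X}
  | n + 1 => starSet C (bigAddClosure C U) (coprodPowBig U n)

/-- `G[a,b] = ∪ { G^m : a ≤ m ≤ b }`. -/
def unionIcc (G : ℤ → Set C) (a b : ℤ) : Set C := ⋃ m ∈ Set.Icc a b, G m

/-- `G(-∞,b] = ∪ { G^m : m ≤ b }`. -/
def unionIic (G : ℤ → Set C) (b : ℤ) : Set C := ⋃ m ∈ Set.Iic b, G m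

/-- `G(-∞,∞) = ∪ { G^m : m ∈ ℤ }`. -/
def unionAll (G : ℤ → Set C) : Set C := ⋃ m : ℤ, G m

/-- `G^{[a,b]} = smd(coprod(G[a,b]))`. -/
def gInt (G : ℤ → Set C) (a b : ℤ) : Set C :=
  smd C {X | extClosure C (unionIcc C G a b) X}

/-- `G^{(-∞,b]} = smd(coprod(G(-∞,b]))`. -/
def gIic (G : ℤ → Set C) (b : ℤ) : Set C :=
  smd C {X | extClosure C (unionIic C G b) X}

/-- `G^{[a,b]}_k = smd(coprod_k(G[a,b]))`. -/
def gIntPow (G : ℤ → Set C) (a b k : ℤ) : Set C :=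
  smd C (coprodPow C (unionIcc C G a b) k.toNat)

/-- `Ḡ^{[a,b]}`. -/
def gBarInt (G : ℤ → Set C) (a b : ℤ) : Set C :=
  {X | bigClosure C (unionIcc C G a b) X}

/-- `Ḡ^{(-∞,b]}`. -/
def gBarIic (G : ℤ → Set C) (b : ℤ) : Set C :=
  {X | bigClosure C (unionIic C G b) X}

/-- `Ḡ^{[a,b]}_k = smd(Coprod_k(G[a,b]))`. -/
def gBarIntPow (G : ℤ → Set C) (a b k : ℤ) : Set C :=
  smd C (coprodPowBig C (unionIcc C G a b) k.toNat)

/-- `M^G_n := G^{(-∞,-n]}`. -/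
def MG (G : ℤ → Set C) (n : ℤ) : Set C := gIic C G (-n)

/-- `R^G_n := ⊥((M^G_n)^⊥)`, orthogonals taken in the whole category. -/
def RG (G : ℤ → Set C) (n : ℤ) : Set C := lOrth C (rOrth C (MG C G n))

/-- A pre-generating sequence. -/
structure IsPreGenSeq (G : ℤ → Set C) : Prop where
  compact : ∀ i : ℤ, G i ⊆ compacts C
  generates : smd C {X | extClosure C (unionAll C G) X} = compacts C

/-- A generating sequence. -/
structure IsGenSeq (G : ℤ → Set C) extends IsPreGenSeq C G : Prop where
  shift_cond : ∀ n : ℤ,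
    shiftSet C (-1) (G n) ∪ G n ∪ shiftSet C 1 (G n) ⊆ gInt C G (n - 1) (n + 1)

/-- A finite generating sequence. -/
structure IsFinGenSeq (G : ℤ → Set C) extends IsGenSeq C G : Prop where
  finite : ∀ i : ℤ, (G i).Finite

/-- ℕ-equivalence of generating sequences. -/
def GenSeqNEquiv (G G' : ℤ → Set C) : Prop :=
  ∃ N : ℤ, 0 ≤ N ∧ (∀ n : ℤ, G' n ⊆ gInt C G (n - N) (n + N)) ∧
    ∀ n : ℤ, G n ⊆ gInt C G' (n - N) (n + N)

/-- ℕ-equivalence of (extended good) metrics. -/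
def MetricNEquiv (M N : ℤ → Set C) : Prop :=
  ∃ n : ℤ, 0 ≤ n ∧ (∀ i : ℤ, M (i + n) ⊆ N i) ∧ ∀ i : ℤ, N (i + n) ⊆ M i

/-- An extended good metric. -/
structure IsExtGoodMetric (M : ℤ → Set C) : Prop where
  zero_mem : ∀ (n : ℤ) (X : C), IsZero X → X ∈ M n
  iso_closed : ∀ (n : ℤ) ⦃X Y : C⦄, (X ≅ Y) → X ∈ M n → Y ∈ M n
  star_subset : ∀ n : ℤ, starSet C (M n) (M n) ⊆ M n
  shift_one : ∀ n : ℤ, shiftSet C 1 (M (n + 1)) ⊆ M n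
  antitone : ∀ n : ℤ, M (n + 1) ⊆ M n
  shift_neg_one : ∀ n : ℤ, shiftSet C (-1) (M (n + 1)) ⊆ M n

/-- An orthogonal metric. -/
structure IsOrthMetric (M : ℤ → Set C) extends IsExtGoodMetric C M : Prop where
  orth : ∀ n : ℤ, lOrth C (rOrth C (M n)) = M n

/-- The closure of the compacts `T̄^c := ∩ₙ T^c ⋆ Rₙ`. -/
def closCompacts (Rm : ℤ → Set C) : Set C := ⋂ n : ℤ, starSet C (compacts C) (Rm n)

/-- `(T, R, A)` is `G`-preapproximable. -/
structure IsGPreApprox (G Rm : ℤ → Set C) (A : ℤ) : Prop where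
  orthMetric : IsOrthMetric C Rm
  A_pos : 0 < A
  cond0 : ∀ i : ℤ, MG C G i ⊆ ⋃ n ∈ {n : ℤ | |n| ≤ A}, shiftSet C n (MG C G (i + 1))
  cond1 : ∀ i : ℤ, MG C G (i + A) ⊆ Rm i ∩ compacts C
  cond2 : ∀ n : ℤ, ∃ N : ℤ, ∀ i : ℤ, N ≤ i → homZero C (G n) (Rm i)

/-- There is a distinguished triangle `E ⟶ F ⟶ D ⟶ ΣE` with `E ∈ S` and `D ∈ D`. -/
def approxTriangle (F : C) (S D : Set C) : Prop :=
  ∃ (E Dd : C) (f : E ⟶ F) (g : F ⟶ Dd) (h : Dd ⟶ E⟦(1 : ℤ)⟧),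
    Triangle.mk f g h ∈ (distTriang C) ∧ E ∈ S ∧ Dd ∈ D

/-- `(T, R, A)` is weakly `G`-approximable. -/
structure IsWeakGApprox (G Rm : ℤ → Set C) (A : ℤ) extends IsGPreApprox C G Rm A : Prop where
  hom_vanish : ∀ n i : ℤ, A ≤ n + i → homZero C (G n) (Rm i)
  approx : ∀ i : ℤ, ∀ F ∈ Rm i,
    approxTriangle C F (gBarInt C G (-A - i) (A - i)) (Rm (i + 1))

/-- `(T, R, A)` is `G`-approximable. -/
structure IsGApprox (G Rm : ℤ → Set C) (A : ℤ) extends IsWeakGApprox C G Rm A : Prop where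
  approx' : ∀ i : ℤ, ∀ F ∈ Rm i,
    approxTriangle C F (gBarIntPow C G (-A - i) (A - i) A) (Rm (i + 1))

/-- `(T, R, A)` is weakly `G`-quasiapproximable. -/
structure IsWeakGQuasiApprox (G Rm : ℤ → Set C) (A : ℤ) extends IsGPreApprox C G Rm A : Prop where
  hom_vanish : ∀ n i : ℤ, A ≤ n + i → homZero C (G n) (Rm i)
  approx : ∀ i : ℤ, ∀ F ∈ Rm i ∩ closCompacts C Rm,
    approxTriangle C F (gBarInt C G (-A - i) (A - i)) (Rm (i + 1) ∩ closCompacts C Rm)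

/-- `(T, R, A)` is `G`-quasiapproximable. -/
structure IsGQuasiApprox (G Rm : ℤ → Set C) (A : ℤ) extends IsWeakGQuasiApprox C G Rm A : Prop where
  approx' : ∀ i : ℤ, ∀ F ∈ Rm i ∩ closCompacts C Rm,
    approxTriangle C F (gBarIntPow C G (-A - i) (A - i) A) (Rm (i + 1) ∩ closCompacts C Rm)

/-- The coproduct of a sequence of objects. -/
noncomputable def seqCoprod (E : ℕ → C) : C := ∐ (fun n : ULift.{v} ℕ => E n.down)

/-- The canonical inclusion into the coproduct of a sequence. -/
noncomputable def seqInj (E : ℕ → C) (n : ℕ) : E n ⟶ seqCoprod C E :=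
  Sigma.ι (fun n : ULift.{v} ℕ => E n.down) (ULift.up n)

/-- The map `1 - shift` on the coproduct of a sequence. -/
noncomputable def oneMinusShift (E : ℕ → C) (e : ∀ n, E n ⟶ E (n + 1)) :
    seqCoprod C E ⟶ seqCoprod C E :=
  Sigma.desc (fun n => seqInj C E n.down - e n.down ≫ seqInj C E (n.down + 1))

/-- `H`, equipped with `π`, `δ`, is a homotopy colimit of the sequence `E`. -/
def IsHocolim (E : ℕ → C) (e : ∀ n, E n ⟶ E (n + 1)) (H : C)
    (π : seqCoprod C E ⟶ H) (δ : H ⟶ (seqCoprod C E)⟦(1 : ℤ)⟧) : Prop :=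
  Triangle.mk (oneMinusShift C E e) π δ ∈ (distTriang C)

/-- A single compact generator. -/
def IsCompactGenerator (G₀ : C) : Prop :=
  IsCompactObj C G₀ ∧ ∀ X : C, (∀ n : ℤ, ∀ f : (shiftFunctor C n).obj G₀ ⟶ X, f = 0) → IsZero X

/-- The strictly full subcategory `{Σʲ G₀}`. -/
def singletonShift (G₀ : C) (j : ℤ) : Set C :=
  {X | Nonempty (X ≅ (shiftFunctor C j).obj G₀)}

/-- The generating sequence `Gⁿ := {Σ⁻ⁿ G₀}`. -/
def genSeqNeg (G₀ : C) (n : ℤ) : Set C := singletonShift C G₀ (-n)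

/-- The generating sequence `Gⁿ := {Σⁿ G₀}`. -/
def genSeqPos (G₀ : C) (n : ℤ) : Set C := singletonShift C G₀ n

/-- A left adjoint of a coproduct-preserving functor preserves compact objects. -/
lemma compact_of_adj {F K : C ⥤ C} (adj : F ⊣ K)
    [∀ α : Type v, PreservesColimitsOfShape (Discrete α) K] {X : C}
    (hX : IsCompactObj C X) : IsCompactObj C (F.obj X) := by
  intro α f g
  obtain ⟨s, h, hh⟩ := hX α (fun a => K.obj (f a))
    (adj.homEquiv _ _ g ≫ inv (sigmaComparison K f))
  refine ⟨s, (adj.homEquiv _ _).symm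
    (h ≫ sigmaComparison K (fun i : {a : α // a ∈ s} => f i.1)), ?_⟩
  apply (adj.homEquiv _ _).injective
  rw [Adjunction.homEquiv_naturality_right, Equiv.apply_symm_apply]
  rw [IsIso.comp_inv_eq] at hh
  rw [hh, Category.assoc, Category.assoc]
  congr 1
  apply Sigma.hom_ext
  intro b
  simp only [Sigma.ι_desc_assoc, ι_comp_sigmaComparison, ι_comp_sigmaComparison_assoc,
    ← Functor.map_comp, Sigma.ι_desc]

lemma compact_iso {X Y : C} (e : X ≅ Y) (hX : IsCompactObj C X) : IsCompactObj C Y := by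
  intro α f g
  obtain ⟨s, h, hh⟩ := hX α f (e.hom ≫ g)
  refine ⟨s, e.inv ≫ h, ?_⟩
  rw [Category.assoc, ← hh, Iso.inv_hom_id_assoc]

lemma extClosure_mono {U V : Set C} (hUV : U ⊆ V) {X : C} (hX : extClosure C U X) :
    extClosure C V X := by
  induction hX with
  | of hx => exact .of (hUV hx)
  | zero hx => exact .zero hx
  | ext f g h ht _ _ h1 h2 => exact .ext f g h ht h1 h2

lemma unionIic_mono (G : ℤ → Set C) {a b : ℤ} (hab : a ≤ b) :
    unionIic C G a ⊆ unionIic C G b := by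
  intro X hX
  simp only [unionIic, Set.mem_iUnion, Set.mem_Iic, exists_prop] at hX ⊢
  obtain ⟨m, hm, hx⟩ := hX
  exact ⟨m, hm.trans hab, hx⟩

lemma MG_anti (G : ℤ → Set C) {a b : ℤ} (hab : a ≤ b) : MG C G b ⊆ MG C G a := by
  rintro X ⟨Y, hY, i, r, hir⟩
  exact ⟨Y, extClosure_mono C (unionIic_mono C G (neg_le_neg hab)) hY, i, r, hir⟩

lemma exists_iic (G : ℤ → Set C) {X : C} (hX : extClosure C (unionAll C G) X) :
    ∃ m : ℤ, extClosure C (unionIic C G m) X := by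
  induction hX with
  | of hx =>
    obtain ⟨m, hm⟩ := Set.mem_iUnion.1 hx
    refine ⟨m, .of ?_⟩
    simp only [unionIic, Set.mem_iUnion, Set.mem_Iic, exists_prop]
    exact ⟨m, le_rfl, hm⟩
  | zero hx => exact ⟨0, .zero hx⟩
  | ext f g h ht _ _ h1 h2 =>
    obtain ⟨m, hm⟩ := h1
    obtain ⟨n, hn⟩ := h2
    exact ⟨max m n, .ext f g h ht
      (extClosure_mono C (unionIic_mono C G (le_max_left _ _)) hm)
      (extClosure_mono C (unionIic_mono C G (le_max_right _ _)) hn)⟩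

lemma part_one (G : ℤ → Set C) (A : ℤ)
    (h : ∀ i : ℤ, MG C G i ⊆ ⋃ n ∈ {n : ℤ | |n| ≤ A}, shiftSet C n (MG C G (i + 1)))
    (i : ℤ) (k : ℕ) (X : C) (hX : X ∈ MG C G i) :
    ∃ n : ℤ, |n| ≤ k * A ∧ X ∈ shiftSet C n (MG C G (i + k)) := by
  induction k with
  | zero =>
    refine ⟨0, by simp, X, by simpa using hX, ⟨((shiftFunctorZero C ℤ).app X).symm⟩⟩
  | succ k ih =>
    obtain ⟨n, hn, Y, hY, ⟨e⟩⟩ := ih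
    have h2 := h _ hY
    simp only [Set.mem_iUnion, Set.mem_setOf_eq, exists_prop] at h2
    obtain ⟨m, hm, Z, hZ, ⟨e'⟩⟩ := h2
    refine ⟨m + n, ?_, Z, ?_, ⟨e ≪≫ (shiftFunctor C n).mapIso e' ≪≫
      ((shiftFunctorAdd C m n).app Z).symm⟩⟩
    · have := abs_add_le m n
      push_cast
      linarith
    · rw [show i + ((k + 1 : ℕ) : ℤ) = i + k + 1 by push_cast; ring]
      exact hZ

theorem statement_1 (G : ℤ → Set C) (A : ℤ)
    (hcg : CompactlyGenerated C) (hG : IsGenSeq C G) (hA : 0 < A)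
    (h : ∀ i : ℤ, MG C G i ⊆ ⋃ n ∈ {n : ℤ | |n| ≤ A}, shiftSet C n (MG C G (i + 1))) :
    (∀ i j : ℤ, 0 < j →
      MG C G i ⊆ ⋃ n ∈ {n : ℤ | |n| ≤ j * A}, shiftSet C n (MG C G (i + j))) ∧
    ∀ i : ℤ, compacts C = ⋃ n : ℤ, shiftSet C n (MG C G i) := by
  refine ⟨?_, ?_⟩
  · intro i j hj X hX
    obtain ⟨k, rfl⟩ := Int.eq_ofNat_of_zero_le hj.le
    simp only [Set.mem_iUnion, Set.mem_setOf_eq, exists_prop]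
    exact part_one C G A h i k X hX
  · intro i
    apply Set.Subset.antisymm
    · intro X hX
      rw [← hG.generates] at hX
      obtain ⟨Y, hY, s, r, hsr⟩ := hX
      obtain ⟨m, hm⟩ := exists_iic C G hY
      have hX : X ∈ MG C G (-m) := ⟨Y, by simpa using hm, s, r, hsr⟩
      obtain ⟨n, -, Z, hZ, e⟩ := part_one C G A h (-m) (i + m).toNat X hX
      exact Set.mem_iUnion.2 ⟨n, Z, MG_anti C G (by omega) hZ, e⟩
    · intro X hX
      obtain ⟨n, Y, ⟨Z, hZ, s, r, hsr⟩, ⟨e⟩⟩ := Set.mem_iUnion.1 hX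
      have hY : Y ∈ compacts C := by
        rw [← hG.generates]
        refine ⟨Z, extClosure_mono C ?_ hZ, s, r, hsr⟩
        intro W hW
        simp only [unionIic, Set.mem_iUnion, exists_prop] at hW
        obtain ⟨m, -, hm⟩ := hW
        exact Set.mem_iUnion.2 ⟨m, hm⟩
      exact compact_iso C e.symm
        (compact_of_adj C (shiftEquiv C n).toAdjunction hY)

end GApprox
end

section
/- Let T be a compactly generated triangulated category with two ℕ-equivalent generating sequences G and G′. Then (1) the extended good metrics M^G and M^{G′} on T^c are ℕ-equivalent, and (2) the orthogonal metrics R^G and R^{G′} on T are ℕ-equivalent. -/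
namespace GApprox

open CategoryTheory CategoryTheory.Limits CategoryTheory.Pretriangulated

universe w v u

variable (C : Type u) [Category.{v} C] [HasZeroObject C] [HasShift C ℤ]
  [Preadditive C] [∀ n : ℤ, (shiftFunctor C n).Additive] [Pretriangulated C]
  [HasCoproducts.{v} C]

/-- Retracts of extension closures are closed under extensions. -/
theorem smd_ext (U : Set C) {X Y Z : C} (f : X ⟶ Y) (g : Y ⟶ Z) (h : Z ⟶ X⟦(1 : ℤ)⟧)
    (hT : Triangle.mk f g h ∈ (distTriang C))
    (hX : X ∈ smd C {X | extClosure C U X}) (hZ : Z ∈ smd C {X | extClosure C U X}) :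
    Y ∈ smd C {X | extClosure C U X} := by
  obtain ⟨X', hX', iX, rX, eX⟩ := hX
  obtain ⟨Z', hZ', iZ, rZ, eZ⟩ := hZ
  obtain ⟨Y', f', g', hT'⟩ := distinguished_cocone_triangle₂ (rZ ≫ h ≫ iX⟦(1 : ℤ)⟧')
  have eX1 : iX⟦(1 : ℤ)⟧' ≫ rX⟦(1 : ℤ)⟧' = 𝟙 _ := by
    rw [← Functor.map_comp, eX, CategoryTheory.Functor.map_id]
  have k1 : h ≫ iX⟦(1 : ℤ)⟧' = iZ ≫ rZ ≫ h ≫ iX⟦(1 : ℤ)⟧' := by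
    rw [reassoc_of% eZ]
  have k2 : (rZ ≫ h ≫ iX⟦(1 : ℤ)⟧') ≫ rX⟦(1 : ℤ)⟧' = rZ ≫ h := by
    rw [Category.assoc, Category.assoc, eX1, Category.comp_id]
  have B : ∃ b : Y ⟶ Y', f ≫ b = iX ≫ f' ∧ g ≫ iZ = b ≫ g' :=
    complete_distinguished_triangle_morphism₂ _ _ hT hT' iX iZ k1
  have D : ∃ c : Y' ⟶ Y, f' ≫ c = rX ≫ f ∧ g' ≫ rZ = c ≫ g :=
    complete_distinguished_triangle_morphism₂ _ _ hT' hT rX rZ k2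
  obtain ⟨b, hb1, hb2⟩ := B
  obtain ⟨c, hc1, hc2⟩ := D
  have m1 : f ≫ b ≫ c = 𝟙 X ≫ f := by
    rw [reassoc_of% hb1, hc1, reassoc_of% eX, Category.id_comp]
  have m2 : g ≫ 𝟙 Z = (b ≫ c) ≫ g := by
    rw [Category.assoc, ← hc2, ← reassoc_of% hb2, eZ]
  have m3 : h ≫ (𝟙 X)⟦(1 : ℤ)⟧' = 𝟙 Z ≫ h := by
    rw [CategoryTheory.Functor.map_id, Category.comp_id, Category.id_comp]
  let φ : Triangle.mk f g h ⟶ Triangle.mk f g h :=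
    { hom₁ := 𝟙 _
      hom₂ := b ≫ c
      hom₃ := 𝟙 _
      comm₁ := m1
      comm₂ := m2
      comm₃ := m3 }
  have hiso : IsIso (b ≫ c) :=
    isIso₂_of_isIso₁₃ φ hT hT (inferInstanceAs (IsIso (𝟙 X))) (inferInstanceAs (IsIso (𝟙 Z)))
  exact ⟨Y', extClosure.ext f' g' _ hT' hX' hZ', b, c ≫ inv (b ≫ c), by
    rw [← Category.assoc, IsIso.hom_inv_id]⟩

theorem smd_smd (A : Set C) : smd C (smd C A) ⊆ smd C A := by
  rintro X ⟨Y, ⟨Z, hZ, i, r, e⟩, i', r', e'⟩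
  exact ⟨Z, hZ, i' ≫ i, r ≫ r', by simp [reassoc_of% e, e']⟩

theorem smd_mono {A B : Set C} (h : A ⊆ B) : smd C A ⊆ smd C B := by
  rintro X ⟨Y, hY, i, r, e⟩
  exact ⟨Y, h hY, i, r, e⟩

theorem smd_ext_le {U V : Set C} (h : U ⊆ smd C {X | extClosure C V X}) :
    smd C {X | extClosure C U X} ⊆ smd C {X | extClosure C V X} := by
  refine (smd_mono C ?_).trans (smd_smd C _)
  intro X hX
  induction hX with
  | of hX => exact h hX
  | zero hX => exact ⟨_, extClosure.zero hX, 𝟙 _, 𝟙 _, by simp⟩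
  | ext f g h hT _ _ h1 h2 => exact smd_ext C V f g h hT h1 h2

theorem self_le_smd_ext (V : Set C) : V ⊆ smd C {X | extClosure C V X} :=
  fun _ hX => ⟨_, extClosure.of hX, 𝟙 _, 𝟙 _, by simp⟩

theorem MG_le {G G' : ℤ → Set C} {N : ℤ} (h : ∀ n : ℤ, G n ⊆ gInt C G' (n - N) (n + N)) (i : ℤ) :
    MG C G (i + N) ⊆ MG C G' i := by
  refine smd_ext_le C ?_
  intro X hX
  simp only [unionIic, Set.mem_iUnion, Set.mem_Iic] at hX
  obtain ⟨m, hm, hX⟩ := hX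
  refine smd_ext_le C ?_ (h m hX)
  refine Set.Subset.trans ?_ (self_le_smd_ext C _)
  intro Y hY
  simp only [unionIcc, unionIic, Set.mem_iUnion, Set.mem_Iic, Set.mem_Icc] at hY ⊢
  obtain ⟨k, hk, hY⟩ := hY
  exact ⟨k, by omega, hY⟩

theorem orth_mono {A B : Set C} (h : A ⊆ B) : lOrth C (rOrth C A) ⊆ lOrth C (rOrth C B) :=
  fun _ hX a ha f => hX a (fun b hb g => ha b (h hb) g) f

theorem statement_2 (G G' : ℤ → Set C)
    (hcg : CompactlyGenerated C) (hG : IsGenSeq C G) (hG' : IsGenSeq C G')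
    (heq : GenSeqNEquiv C G G') :
    MetricNEquiv C (MG C G) (MG C G') ∧ MetricNEquiv C (RG C G) (RG C G') := by
  obtain ⟨N, hN, h1, h2⟩ := heq
  exact ⟨⟨N, hN, MG_le C h2, MG_le C h1⟩,
    ⟨N, hN, fun i => orth_mono C (MG_le C h2 i), fun i => orth_mono C (MG_le C h1 i)⟩⟩

end GApprox
end

section
/- Let T be a compactly generated triangulated category with a pre-generating sequence G = {G^n}_{n∈ℤ} and an orthogonal metric R such that for every n ∈ ℤ one has Hom(G^n, R_i) = 0 for all sufficiently large i. Then for every compact object H of T, Hom(H, R_i) = 0 for all sufficiently large i. -/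
namespace GApprox

open CategoryTheory CategoryTheory.Limits CategoryTheory.Pretriangulated

universe w v u

variable (C : Type u) [Category.{v} C] [HasZeroObject C] [HasShift C ℤ]
  [Preadditive C] [∀ n : ℤ, (shiftFunctor C n).Additive] [Pretriangulated C]
  [HasCoproducts.{v} C]

/-- Every object of the extension closure eventually has no maps to the metric. -/
theorem extClosure_vanish (G Rm : ℤ → Set C)
    (hvan : ∀ n : ℤ, ∃ N : ℤ, ∀ i : ℤ, N ≤ i → homZero C (G n) (Rm i))
    (K : C) (hK : extClosure C (unionAll C G) K) :
    ∃ N : ℤ, ∀ i : ℤ, N ≤ i → ∀ Y ∈ Rm i, ∀ f : K ⟶ Y, f = 0 := by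
  induction hK with
  | of hX =>
    obtain ⟨n, hn⟩ := Set.mem_iUnion.mp hX
    obtain ⟨N, hN⟩ := hvan n
    exact ⟨N, fun i hi Y hY f => hN i hi _ hn Y hY f⟩
  | zero hX => exact ⟨0, fun i _ Y _ f => hX.eq_of_src f 0⟩
  | ext f g h hT _ _ ihX ihZ =>
    obtain ⟨N₁, h₁⟩ := ihX
    obtain ⟨N₂, h₂⟩ := ihZ
    refine ⟨max N₁ N₂, fun i hi Y hY k => ?_⟩
    obtain ⟨l, hl⟩ := Triangle.yoneda_exact₂ _ hT k
      (h₁ i ((le_max_left _ _).trans hi) Y hY _)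
    have hl0 := h₂ i ((le_max_right _ _).trans hi) Y hY l
    rw [hl, hl0]
    exact comp_zero

theorem statement_3 (G Rm : ℤ → Set C)
    (hcg : CompactlyGenerated C) (hG : IsPreGenSeq C G) (hR : IsOrthMetric C Rm)
    (hvan : ∀ n : ℤ, ∃ N : ℤ, ∀ i : ℤ, N ≤ i → homZero C (G n) (Rm i)) :
    ∀ H ∈ compacts C, ∃ N : ℤ, ∀ i : ℤ, N ≤ i → ∀ Y ∈ Rm i, ∀ f : H ⟶ Y, f = 0 := by
  intro H hH
  rw [← hG.generates] at hH
  obtain ⟨K, hK, j, r, hjr⟩ := hH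
  obtain ⟨N, hN⟩ := extClosure_vanish C G Rm hvan K hK
  refine ⟨N, fun i hi Y hY f => ?_⟩
  rw [← Category.id_comp f, ← hjr, Category.assoc, hN i hi Y hY (r ≫ f), comp_zero]


end GApprox
end

section
/- Let T be a compactly generated triangulated category with a pre-generating sequence G = {G^n}_{n∈ℤ} and an orthogonal metric R such that for every n ∈ ℤ one has Hom(G^n, R_i) = 0 for all sufficiently large i. Then the closure of the compacts T̄^c := ∩_{n∈ℤ} T^c ⋆ R_n is a triangulated subcategory of T (it is closed under suspension, desuspension, and extensions). -/
namespace GApprox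

open CategoryTheory CategoryTheory.Limits CategoryTheory.Pretriangulated

universe w v u

variable (C : Type u) [Category.{v} C] [HasZeroObject C] [HasShift C ℤ]
  [Preadditive C] [∀ n : ℤ, (shiftFunctor C n).Additive] [Pretriangulated C]
  [HasCoproducts.{v} C]

section Helpers

variable {C}

open Classical in
/-- The idempotent of a coproduct given by the projection to a finite subcoproduct. -/
noncomputable def projFin {α : Type v} (f : α → C) (s : Finset α) : (∐ f) ⟶ ∐ f :=
  Sigma.desc (fun i => if i ∈ s then Sigma.ι f i else 0)

lemma ι_projFin {α : Type v} (f : α → C) (s : Finset α) {i : α} (hi : i ∈ s) :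
    Sigma.ι f i ≫ projFin f s = Sigma.ι f i := by
  simp [projFin, hi]

lemma ι_projFin_not {α : Type v} (f : α → C) (s : Finset α) {i : α} (hi : i ∉ s) :
    Sigma.ι f i ≫ projFin f s = 0 := by
  simp [projFin, hi]

lemma IsCompactObj.exists_fix {K : C} (hK : IsCompactObj C K) {α : Type v} (f : α → C)
    (g : K ⟶ ∐ f) : ∃ s : Finset α, ∀ φ : (∐ f) ⟶ ∐ f,
      (∀ i ∈ s, Sigma.ι f i ≫ φ = Sigma.ι f i) → g ≫ φ = g := by
  obtain ⟨s, h, rfl⟩ := hK α f g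
  refine ⟨s, fun φ hφ => ?_⟩
  rw [Category.assoc]
  congr 1
  apply Sigma.hom_ext
  rintro ⟨i, hi⟩
  simp [hφ i hi]

lemma IsCompactObj.of_proj {K : C}
    (hK : ∀ (α : Type v) (f : α → C) (g : K ⟶ ∐ f), ∃ s : Finset α, g ≫ projFin f s = g) :
    IsCompactObj C K := by
  classical
  intro α f g
  obtain ⟨s, hs⟩ := hK α f g
  refine ⟨s, g ≫ Sigma.desc (fun i => if hi : i ∈ s then
    Sigma.ι (fun i : {a : α // a ∈ s} => f i.1) ⟨i, hi⟩ else 0), ?_⟩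
  rw [Category.assoc]
  conv_lhs => rw [← hs]
  congr 1
  apply Sigma.hom_ext
  intro i
  by_cases hi : i ∈ s
  · rw [ι_projFin f s hi]; simp [hi]
  · rw [ι_projFin_not f s hi]; simp [hi]

lemma ex2 {X Y Z : C} {a : X ⟶ Y} {b : Y ⟶ Z} {c : Z ⟶ X⟦(1 : ℤ)⟧}
    (hT : Triangle.mk a b c ∈ (distTriang C)) {t : C} (u : Y ⟶ t) (hu : a ≫ u = 0) :
    ∃ w : Z ⟶ t, u = b ≫ w :=
  Triangle.yoneda_exact₂ _ hT u hu

lemma ex3 {X Y Z : C} {a : X ⟶ Y} {b : Y ⟶ Z} {c : Z ⟶ X⟦(1 : ℤ)⟧}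
    (hT : Triangle.mk a b c ∈ (distTriang C)) {t : C} (u : Z ⟶ t) (hu : b ≫ u = 0) :
    ∃ w : X⟦(1 : ℤ)⟧ ⟶ t, u = c ≫ w :=
  Triangle.yoneda_exact₃ _ hT u hu

lemma rot' {X Y Z : C} {a : X ⟶ Y} {b : Y ⟶ Z} {c : Z ⟶ X⟦(1 : ℤ)⟧}
    (hT : Triangle.mk a b c ∈ (distTriang C)) :
    Triangle.mk b c (-(a⟦(1 : ℤ)⟧')) ∈ (distTriang C) :=
  rot_of_distTriang _ hT

lemma co1 {X Y Z : C} {a : X ⟶ Y} {b : Y ⟶ Z} {c : Z ⟶ X⟦(1 : ℤ)⟧}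
    (hT : Triangle.mk a b c ∈ (distTriang C)) {t : C} (u : t ⟶ X⟦(1 : ℤ)⟧)
    (hu : u ≫ a⟦(1 : ℤ)⟧' = 0) : ∃ w : t ⟶ Z, u = w ≫ c :=
  Triangle.coyoneda_exact₁ _ hT u hu

lemma compact_ext {X Y Z : C} {a : X ⟶ Y} {b : Y ⟶ Z} {c : Z ⟶ X⟦(1 : ℤ)⟧}
    (hT : Triangle.mk a b c ∈ (distTriang C)) (hX : IsCompactObj C X) (hZ : IsCompactObj C Z) :
    IsCompactObj C Y := by
  classical
  apply IsCompactObj.of_proj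
  intro α f g
  obtain ⟨s, hs⟩ := hX.exists_fix f (a ≫ g)
  have h1 := hs (projFin f s) (fun i hi => ι_projFin f s hi)
  obtain ⟨k, hk⟩ := ex2 hT (g - g ≫ projFin f s) (by
    rw [Preadditive.comp_sub, ← Category.assoc, h1, sub_self])
  obtain ⟨s', hs'⟩ := hZ.exists_fix f k
  refine ⟨s ∪ s', ?_⟩
  have h2 := hs' (projFin f (s ∪ s')) (fun i hi => ι_projFin f _ (Finset.mem_union_right _ hi))
  have h3 : projFin f s ≫ projFin f (s ∪ s') = projFin f s := by
    apply Sigma.hom_ext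
    intro i
    by_cases hi : i ∈ s
    · rw [← Category.assoc, ι_projFin f s hi, ι_projFin f _ (Finset.mem_union_left _ hi)]
    · rw [← Category.assoc, ι_projFin_not f s hi, zero_comp]
  have h4 : (g - g ≫ projFin f s) ≫ projFin f (s ∪ s') = g - g ≫ projFin f s := by
    rw [hk, Category.assoc, h2]
  rw [Preadditive.sub_comp, Category.assoc, h3] at h4
  exact sub_left_injective h4

lemma compact_equiv (e : C ≌ C) {K : C} (hK : IsCompactObj C K) :
    IsCompactObj C (e.functor.obj K) := by
  apply IsCompactObj.of_proj
  intro α f g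
  let θ := PreservesCoproduct.iso e.inverse f
  have hθ : ∀ i, Sigma.ι (fun j => e.inverse.obj (f j)) i ≫ θ.inv = e.inverse.map (Sigma.ι f i) := by
    intro i
    simp [θ, PreservesCoproduct.inv_hom]
  let g' : K ⟶ e.inverse.obj (∐ f) := e.toAdjunction.homEquiv _ _ g
  obtain ⟨s, hs⟩ := hK.exists_fix _ (g' ≫ θ.hom)
  refine ⟨s, ?_⟩
  have h := hs (θ.inv ≫ e.inverse.map (projFin f s) ≫ θ.hom) (fun i hi => by
    rw [← Category.assoc, hθ, ← Category.assoc, ← Functor.map_comp, ι_projFin f s hi, ← hθ]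
    simp)
  have h' : g' ≫ e.inverse.map (projFin f s) = g' := by
    rw [← cancel_mono θ.hom]
    simpa using h
  apply (e.toAdjunction.homEquiv _ _).injective
  rw [Adjunction.homEquiv_naturality_right]
  exact h'

lemma compact_shift (n : ℤ) {K : C} (hK : IsCompactObj C K) : IsCompactObj C (K⟦n⟧) :=
  compact_equiv (shiftEquiv C n) hK

lemma compact_vanish {G Rm : ℤ → Set C} (hG : IsPreGenSeq C G)
    (hvan : ∀ n : ℤ, ∃ N : ℤ, ∀ i : ℤ, N ≤ i → homZero C (G n) (Rm i)) {K : C}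
    (hK : IsCompactObj C K) : ∃ N : ℤ, ∀ i : ℤ, N ≤ i → ∀ b ∈ Rm i, ∀ f : K ⟶ b, f = 0 := by
  have hK' : K ∈ smd C {X | extClosure C (unionAll C G) X} := by
    rw [hG.generates]; exact hK
  obtain ⟨Y, hY, i, r, hir⟩ := hK'
  have key : ∃ N : ℤ, ∀ i : ℤ, N ≤ i → ∀ b ∈ Rm i, ∀ f : Y ⟶ b, f = 0 := by
    change extClosure C (unionAll C G) Y at hY
    clear hir i r
    induction hY with
    | of h =>
      obtain ⟨n, hn⟩ := Set.mem_iUnion.1 h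
      obtain ⟨N, hN⟩ := hvan n
      exact ⟨N, fun i hi b hb f => hN i hi _ hn b hb f⟩
    | zero h => exact ⟨0, fun i hi b hb f => h.eq_of_src _ _⟩
    | ext f g h hT _ _ ih1 ih2 =>
      obtain ⟨N1, h1⟩ := ih1
      obtain ⟨N2, h2⟩ := ih2
      refine ⟨max N1 N2, fun i hi b hb φ => ?_⟩
      obtain ⟨k, hk⟩ := ex2 hT φ
        (h1 i (le_trans (le_max_left _ _) hi) b hb _)
      rw [hk, h2 i (le_trans (le_max_right _ _) hi) b hb k, comp_zero]
  obtain ⟨N, hN⟩ := key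
  refine ⟨N, fun j hj b hb f => ?_⟩
  rw [← Category.id_comp f, ← hir, Category.assoc, hN j hj b hb (r ≫ f), comp_zero]

lemma yo1 {X Y Z : C} {a : X ⟶ Y} {b : Y ⟶ Z} {c : Z ⟶ X⟦(1 : ℤ)⟧}
    (hT : Triangle.mk a b c ∈ (distTriang C)) {t : C} (u : X⟦(1 : ℤ)⟧ ⟶ t) (hu : c ≫ u = 0) :
    ∃ w : Y⟦(1 : ℤ)⟧ ⟶ t, u = a⟦(1 : ℤ)⟧' ≫ w := by
  obtain ⟨w, hw⟩ := ex3 (rot' hT) u hu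
  refine ⟨-w, ?_⟩
  rw [hw]
  simp

lemma yo2 {X Y Z : C} {a : X ⟶ Y} {b : Y ⟶ Z} {c : Z ⟶ X⟦(1 : ℤ)⟧}
    (hT : Triangle.mk a b c ∈ (distTriang C)) {t : C} (u : Y⟦(1 : ℤ)⟧ ⟶ t)
    (hu : a⟦(1 : ℤ)⟧' ≫ u = 0) :
    ∃ w : Z⟦(1 : ℤ)⟧ ⟶ t, u = b⟦(1 : ℤ)⟧' ≫ w := by
  refine yo1 (rot' hT) u ?_
  change (-(a⟦(1 : ℤ)⟧')) ≫ u = 0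
  rw [Preadditive.neg_comp, hu, neg_zero]

/-- A four-lemma style argument replacing the `3 × 3` lemma. -/
lemma third_vanish {X Y Z KX KY KZ RX RY RZ t : C}
    {x : X ⟶ Y} {y : Y ⟶ Z} {z : Z ⟶ X⟦(1 : ℤ)⟧} (hT : Triangle.mk x y z ∈ (distTriang C))
    {k : KX ⟶ KY} {l : KY ⟶ KZ} {m : KZ ⟶ KX⟦(1 : ℤ)⟧}
    (hK : Triangle.mk k l m ∈ (distTriang C))
    {a : KX ⟶ X} {a' : X ⟶ RX} {a'' : RX ⟶ KX⟦(1 : ℤ)⟧}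
    (hA : Triangle.mk a a' a'' ∈ (distTriang C))
    {b : KY ⟶ Y} {b' : Y ⟶ RY} {b'' : RY ⟶ KY⟦(1 : ℤ)⟧}
    (hB : Triangle.mk b b' b'' ∈ (distTriang C))
    {c : KZ ⟶ Z} {c' : Z ⟶ RZ} {c'' : RZ ⟶ KZ⟦(1 : ℤ)⟧}
    (hC : Triangle.mk c c' c'' ∈ (distTriang C))
    (h1 : k ≫ b = a ≫ x) (h2 : l ≫ c = b ≫ y) (h3 : m ≫ a⟦(1 : ℤ)⟧' = c ≫ z)
    (vX : ∀ f : RX ⟶ t, f = 0) (vZ : ∀ f : RZ ⟶ t, f = 0) (p : RY ⟶ t) : p = 0 := by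
  have e0 : b ≫ b' = 0 := comp_distTriang_mor_zero₁₂ _ hB
  have e1 : b'' ≫ b⟦(1 : ℤ)⟧' = 0 := comp_distTriang_mor_zero₃₁ _ hB
  have e2 : m ≫ k⟦(1 : ℤ)⟧' = 0 := comp_distTriang_mor_zero₃₁ _ hK
  have e3 : y ≫ z = 0 := comp_distTriang_mor_zero₂₃ _ hT
  have injX : ∀ f : X ⟶ t, a ≫ f = 0 → f = 0 := fun f hf => by
    obtain ⟨g, hg⟩ := ex2 hA f hf
    rw [hg, vX g, comp_zero]
  have injZ : ∀ f : Z ⟶ t, c ≫ f = 0 → f = 0 := fun f hf => by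
    obtain ⟨g, hg⟩ := ex2 hC f hf
    rw [hg, vZ g, comp_zero]
  -- the composite `Y ⟶ RY ⟶ t` vanishes
  have hq : b' ≫ p = 0 := by
    obtain ⟨q', hq'⟩ := ex2 hT (b' ≫ p) (injX _ (by
      change a ≫ x ≫ b' ≫ p = 0
      rw [← reassoc_of% h1, reassoc_of% e0, zero_comp, comp_zero]))
    change b' ≫ p = y ≫ q' at hq'
    obtain ⟨w, hw⟩ := ex3 hK (c ≫ q') (by
      change l ≫ c ≫ q' = 0
      rw [reassoc_of% h2, ← hq', reassoc_of% e0, zero_comp])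
    change c ≫ q' = m ≫ w at hw
    obtain ⟨w', hw'⟩ := yo1 hA w (vX _)
    have h5 : q' - z ≫ w' = 0 := injZ _ (by
      rw [Preadditive.comp_sub, hw, hw', reassoc_of% h3, sub_self])
    rw [hq', sub_eq_zero.1 h5, reassoc_of% e3, zero_comp]
  obtain ⟨p', hp'⟩ := ex3 hB p hq
  change p = b'' ≫ p' at hp'
  obtain ⟨u, hu⟩ := yo1 hA (k⟦(1 : ℤ)⟧' ≫ p') (vX _)
  obtain ⟨u', hu'⟩ := yo1 hT u (injZ _ (by
    rw [← reassoc_of% h3, ← hu, reassoc_of% e2, zero_comp]))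
  have h1' : k⟦(1 : ℤ)⟧' ≫ b⟦(1 : ℤ)⟧' = a⟦(1 : ℤ)⟧' ≫ x⟦(1 : ℤ)⟧' := by
    rw [← Functor.map_comp, h1, Functor.map_comp]
  have h2' : l⟦(1 : ℤ)⟧' ≫ c⟦(1 : ℤ)⟧' = b⟦(1 : ℤ)⟧' ≫ y⟦(1 : ℤ)⟧' := by
    rw [← Functor.map_comp, h2, Functor.map_comp]
  obtain ⟨v, hv⟩ := yo2 hK (p' - b⟦(1 : ℤ)⟧' ≫ u') (by
    rw [Preadditive.comp_sub, hu, hu', reassoc_of% h1', sub_self])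
  obtain ⟨v', hv'⟩ := yo1 hC v (vZ _)
  have hfin : p' = b⟦(1 : ℤ)⟧' ≫ (y⟦(1 : ℤ)⟧' ≫ v' + u') := by
    rw [Preadditive.comp_add, ← reassoc_of% h2', ← hv', ← hv, sub_add_cancel]
  rw [hp', hfin, reassoc_of% e1, zero_comp]

lemma metric_mono {Rm : ℤ → Set C} (hR : IsExtGoodMetric C Rm) {n m : ℤ} (h : n ≤ m) :
    Rm m ⊆ Rm n := by
  induction m, h using Int.le_induction with
  | base => exact subset_rfl
  | succ k _ ih => exact (hR.antitone k).trans ih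

lemma star_shift {A B A' B' : Set C} (n : ℤ) (hA : ∀ X ∈ A, X⟦n⟧ ∈ A') (hB : ∀ X ∈ B, X⟦n⟧ ∈ B')
    {X : C} (hX : X ∈ starSet C A B) : X⟦n⟧ ∈ starSet C A' B' := by
  obtain ⟨K, R, f, g, h, hT, hK, hR⟩ := hX
  exact ⟨K⟦n⟧, R⟦n⟧, _, _, _, Triangle.shift_distinguished _ hT n, hA _ hK, hB _ hR⟩

end Helpers

/-- the closure of the compacts is a triangulated subcategory. -/
theorem statement_4 (G Rm : ℤ → Set C)
    (hcg : CompactlyGenerated C) (hG : IsPreGenSeq C G) (hR : IsOrthMetric C Rm)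
    (hvan : ∀ n : ℤ, ∃ N : ℤ, ∀ i : ℤ, N ≤ i → homZero C (G n) (Rm i)) :
    (∀ X ∈ closCompacts C Rm, (shiftFunctor C (1 : ℤ)).obj X ∈ closCompacts C Rm) ∧
    (∀ X ∈ closCompacts C Rm, (shiftFunctor C (-1 : ℤ)).obj X ∈ closCompacts C Rm) ∧
    starSet C (closCompacts C Rm) (closCompacts C Rm) ⊆ closCompacts C Rm := by
  have hE := hR.toIsExtGoodMetric
  refine ⟨fun X hX => ?_, fun X hX => ?_, ?_⟩
  · refine Set.mem_iInter.2 fun n => ?_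
    exact star_shift 1 (fun K hK => compact_shift 1 hK)
      (fun R hR' => hE.shift_one n ⟨R, hR', ⟨Iso.refl _⟩⟩) (Set.mem_iInter.1 hX (n + 1))
  · refine Set.mem_iInter.2 fun n => ?_
    exact star_shift (-1) (fun K hK => compact_shift (-1) hK)
      (fun R hR' => hE.shift_neg_one n ⟨R, hR', ⟨Iso.refl _⟩⟩) (Set.mem_iInter.1 hX (n + 1))
  · rintro Y ⟨X, Z, x, y, z, hT, hX, hZ⟩
    refine Set.mem_iInter.2 fun n => ?_
    obtain ⟨KZ, RZ, c, c', c'', hC, hKZ, hRZ⟩ := Set.mem_iInter.1 hZ n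
    obtain ⟨N, hN⟩ := compact_vanish hG hvan hKZ
    obtain ⟨KX, RX, a, a', a'', hA, hKX, hRX⟩ := Set.mem_iInter.1 hX (max n N + 1)
    have hRX1 : RX⟦(1 : ℤ)⟧ ∈ Rm (max n N) := hE.shift_one _ ⟨RX, hRX, ⟨Iso.refl _⟩⟩
    have hRXn : RX ∈ Rm n :=
      metric_mono hE (le_max_left n N) (hE.antitone _ hRX)
    obtain ⟨m, hm⟩ : ∃ m : KZ ⟶ KX⟦(1 : ℤ)⟧, c ≫ z = m ≫ a⟦(1 : ℤ)⟧' := by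
      have h0 : (c ≫ z) ≫ a'⟦(1 : ℤ)⟧' = 0 := hN _ (le_max_right n N) _ hRX1 _
      obtain ⟨m, hm⟩ := co1 (rot' hA) (c ≫ z) h0
      refine ⟨-m, ?_⟩
      rw [hm]
      simp
    obtain ⟨KY, k, l, hK⟩ := distinguished_cocone_triangle₂ m
    obtain ⟨b, h1, h2⟩ :=
      (complete_distinguished_triangle_morphism₂ _ _ hK hT a c hm.symm :
        ∃ b : KY ⟶ Y, k ≫ b = a ≫ x ∧ l ≫ c = b ≫ y)
    obtain ⟨RY, b', b'', hB⟩ := distinguished_cocone_triangle b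
    refine ⟨KY, RY, b, b', b'', hB, compact_ext hK hKX hKZ, ?_⟩
    rw [← hR.orth n]
    intro t ht p
    exact third_vanish hT hK hA hB hC h1 h2 hm.symm (ht _ hRXn) (ht _ hRZ) p

end GApprox
end

section
/- Let T be a compactly generated triangulated category with a generating sequence G, an orthogonal metric R, and an integer A > 0 such that (T, R, A) is G-preapproximable. Then (1) for every i ∈ ℤ, T^c ⊆ ∪_{n∈ℤ} Σ^n R_i; and (2) T^c ⊆ T̄^c ⊆ ∪_{n∈ℤ} R_n, where T̄^c := ∩_{n∈ℤ} T^c ⋆ R_n is the closure of the compacts. -/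
namespace GApprox

open CategoryTheory CategoryTheory.Limits CategoryTheory.Pretriangulated

universe w v u

variable (C : Type u) [Category.{v} C] [HasZeroObject C] [HasShift C ℤ]
  [Preadditive C] [∀ n : ℤ, (shiftFunctor C n).Additive] [Pretriangulated C]
  [HasCoproducts.{v} C]

theorem extClosure_bounded (G : ℤ → Set C) {X : C} (h : extClosure C (unionAll C G) X) :
    ∃ b : ℤ, ∀ b', b ≤ b' → extClosure C (unionIic C G b') X := by
  induction h with
  | of hX =>
    obtain ⟨m, hm⟩ := Set.mem_iUnion.1 hX
    refine ⟨m, fun b' hb => extClosure.of ?_⟩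
    simp only [unionIic, Set.mem_iUnion]
    exact ⟨m, hb, hm⟩
  | zero hX => exact ⟨0, fun _ _ => extClosure.zero hX⟩
  | ext f g h ht _ _ ih1 ih2 =>
    obtain ⟨b1, h1⟩ := ih1
    obtain ⟨b2, h2⟩ := ih2
    exact ⟨max b1 b2, fun b' hb => extClosure.ext f g h ht
      (h1 b' (le_trans (le_max_left _ _) hb)) (h2 b' (le_trans (le_max_right _ _) hb))⟩

theorem compacts_bounded (G : ℤ → Set C) (hG : IsGenSeq C G) {X : C} (hX : X ∈ compacts C) :
    ∃ j : ℤ, ∀ j', j' ≤ j → X ∈ MG C G j' := by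
  rw [← hG.generates] at hX
  obtain ⟨Y, hY, i, r, hir⟩ := hX
  obtain ⟨b, hb⟩ := extClosure_bounded C G hY
  exact ⟨-b, fun j' hj => ⟨Y, hb (-j') (by omega), i, r, hir⟩⟩

theorem MG_shift (G Rm : ℤ → Set C) (A : ℤ) (hpre : IsGPreApprox C G Rm A) {X : C} {j : ℤ}
    (hX : X ∈ MG C G j) (k : ℕ) : ∃ n : ℤ, X ∈ shiftSet C n (MG C G (j + k)) := by
  induction k with
  | zero => exact ⟨0, X, by simpa using hX, ⟨((shiftFunctorZero C ℤ).app X).symm⟩⟩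
  | succ k ih =>
    obtain ⟨n, a, ha, ⟨e⟩⟩ := ih
    have := hpre.cond0 _ ha
    simp only [Set.mem_iUnion] at this
    obtain ⟨m, _, b, hb, ⟨e'⟩⟩ := this
    refine ⟨m + n, b, ?_, ⟨e ≪≫ (shiftFunctor C n).mapIso e' ≪≫
      ((shiftFunctorAdd C m n).app b).symm⟩⟩
    push_cast
    rwa [← add_assoc]

theorem metric_antitone (M : ℤ → Set C) (h : IsExtGoodMetric C M) {a b : ℤ} (hab : a ≤ b) :
    M b ⊆ M a := by
  obtain ⟨k, rfl⟩ := Int.le.dest hab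
  clear hab
  induction k with
  | zero => simp
  | succ k ih =>
    push_cast
    rw [← add_assoc]
    exact (h.antitone _).trans ih

theorem statement_6 (G Rm : ℤ → Set C) (A : ℤ)
    (hcg : CompactlyGenerated C) (hG : IsGenSeq C G)
    (hpre : IsGPreApprox C G Rm A) :
    (∀ i : ℤ, compacts C ⊆ ⋃ n : ℤ, shiftSet C n (Rm i)) ∧
    compacts C ⊆ closCompacts C Rm ∧
    closCompacts C Rm ⊆ ⋃ n : ℤ, Rm n := by
  refine ⟨fun i X hX => ?_, fun X hX => ?_, fun X hX => ?_⟩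
  · obtain ⟨j, hj⟩ := compacts_bounded C G hG hX
    have h1 := hj (min j (i + A)) (min_le_left _ _)
    obtain ⟨k, hk⟩ := Int.le.dest (min_le_right j (i + A))
    obtain ⟨n, a, ha, e⟩ := MG_shift C G Rm A hpre h1 k
    rw [hk] at ha
    exact Set.mem_iUnion.2 ⟨n, a, (hpre.cond1 i ha).1, e⟩
  · refine Set.mem_iInter.2 fun n => ?_
    exact ⟨X, _, 𝟙 X, 0, 0, contractible_distinguished X, hX,
      hpre.orthMetric.zero_mem n _ (isZero_zero C)⟩
  · obtain ⟨K, Z, f, g, h, ht, hK, hZ⟩ := Set.mem_iInter.1 hX 0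
    obtain ⟨j, hj⟩ := compacts_bounded C G hG hK
    have h1 : K ∈ Rm (j - A) := (hpre.cond1 (j - A) (hj _ (by omega))).1
    have hm := hpre.orthMetric.toIsExtGoodMetric
    exact Set.mem_iUnion.2 ⟨min (j - A) 0, hm.star_subset _ ⟨K, Z, f, g, h, ht,
      metric_antitone C Rm hm (min_le_left _ _) h1,
      metric_antitone C Rm hm (min_le_right _ _) hZ⟩⟩

end GApprox
end
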